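/- Let n ≥ 1 and let Q ⊆ ℝⁿ be a polytope containing 0 in its interior with (finite) vertex set S, and let a : S → ℤ assign to each vertex a positive integer weight. Assume: (i) for every extreme point v of the dual polytope Q*, the facet F_v = {u ∈ Q : ⟨v,u⟩ = −1} has exactly n vertices e₁,…,eₙ, and the vectors (a(e₁)·e₁, …, a(eₙ)·eₙ) form a ℤ-basis of the lattice ℤⁿ; (ii) r := #S − n satisfies r ≥ 2; (iii) C is a real number such that Σ_{s∈T} a(s) ≤ C for every subset T ⊆ S with at most n elements. Let A = max_{s∈S} a(s). Then vol(Q*) ≤ (C^r · A)ⁿ. -/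

import Mathlib

/-- The dual set `Q* = {v : ⟨v,u⟩ ≥ -1 for all u ∈ Q}` of a subset of `ℝⁿ`. -/
def dualSet (n : ℕ) (Q : Set (Fin n → ℝ)) : Set (Fin n → ℝ) :=
  {v | ∀ u ∈ Q, -1 ≤ ∑ i, v i * u i}
structure FD (n : ℕ) (S : Finset (Fin n → ℝ)) (a : (Fin n → ℝ) → ℤ) (v : Fin n → ℝ)
    (e : Fin n → (Fin n → ℝ)) (M N : Matrix (Fin n) (Fin n) ℤ) : Prop where
  inj : Function.Injective e
  mem : ∀ i, e i ∈ S
  iff : ∀ s ∈ S, (v ⬝ᵥ s = -1 ↔ ∃ i, e i = s)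
  row : ∀ i j, ((M i j : ℤ) : ℝ) = (a (e i) : ℝ) * e i j
  mn : M * N = 1
  nm : N * M = 1

theorem mem_dual {n : ℕ} {S : Finset (Fin n → ℝ)} {x : Fin n → ℝ} :
    x ∈ dualSet n (convexHull ℝ (S : Set (Fin n → ℝ))) ↔ ∀ s ∈ S, -1 ≤ x ⬝ᵥ s := by
  constructor
  · intro h s hs
    exact h s (subset_convexHull ℝ _ hs)
  · intro h u hu
    have hc : Convex ℝ {u : Fin n → ℝ | -1 ≤ x ⬝ᵥ u} := by
      intro y hy z hz α β hα hβ hαβ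
      simp only [Set.mem_setOf_eq, dotProduct_add, dotProduct_smul, smul_eq_mul] at *
      nlinarith
    exact convexHull_min (fun s hs => h s hs) hc hu

theorem dual_convex {n : ℕ} {Q : Set (Fin n → ℝ)} : Convex ℝ (dualSet n Q) := by
  intro y hy z hz α β hα hβ hαβ u hu
  have h1 := hy u hu
  have h2 := hz u hu
  change -1 ≤ y ⬝ᵥ u at h1
  change -1 ≤ z ⬝ᵥ u at h2
  change -1 ≤ (α • y + β • z) ⬝ᵥ u
  simp only [add_dotProduct, smul_dotProduct, smul_eq_mul]
  nlinarith

theorem small_mem {n : ℕ} {Q : Set (Fin n → ℝ)} (h0 : (0 : Fin n → ℝ) ∈ interior Q) :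
    ∃ δ > 0, ∀ x : Fin n → ℝ, ‖x‖ ≤ δ → x ∈ Q := by
  rw [mem_interior_iff_mem_nhds, Metric.mem_nhds_iff] at h0
  obtain ⟨ε, hε, h⟩ := h0
  refine ⟨ε / 2, by positivity, fun x hx => h ?_⟩
  rw [mem_ball_zero_iff]
  linarith

theorem dual_compact {n : ℕ} {Q : Set (Fin n → ℝ)} (h0 : (0 : Fin n → ℝ) ∈ interior Q) :
    IsCompact (dualSet n Q) := by
  obtain ⟨δ, hδ, hs⟩ := small_mem h0
  apply Metric.isCompact_of_isClosed_isBounded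
  · have : dualSet n Q = ⋂ u ∈ Q, {v : Fin n → ℝ | -1 ≤ ∑ i, v i * u i} := by
      ext v; simp [dualSet]
    rw [this]
    refine isClosed_biInter fun u _ => isClosed_le continuous_const (by fun_prop)
  · rw [isBounded_iff_forall_norm_le]
    refine ⟨1 / δ, fun x hx => ?_⟩
    rw [pi_norm_le_iff_of_nonneg (by positivity)]
    intro i
    have h1 := hx (Pi.single i δ) (hs _ (by rw [Pi.norm_single]; simp [abs_of_pos hδ]))
    have h2 := hx (Pi.single i (-δ)) (hs _ (by rw [Pi.norm_single]; simp [abs_of_pos hδ]))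
    change -1 ≤ x ⬝ᵥ Pi.single i δ at h1
    change -1 ≤ x ⬝ᵥ Pi.single i (-δ) at h2
    rw [dotProduct_single] at h1 h2
    rw [Real.norm_eq_abs, abs_le, le_div_iff₀ hδ, ← neg_div, div_le_iff₀ hδ]
    constructor <;> linarith

theorem exists_min {n : ℕ} {Q : Set (Fin n → ℝ)} (h0 : (0 : Fin n → ℝ) ∈ interior Q)
    (p : Fin n → ℝ) : ∃ u ∈ Set.extremePoints ℝ (dualSet n Q),
      ∀ x ∈ dualSet n Q, u ⬝ᵥ p ≤ x ⬝ᵥ p := by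
  have hK := dual_compact h0
  have hcont : Continuous fun x : Fin n → ℝ => x ⬝ᵥ p := by
    unfold dotProduct; fun_prop
  obtain ⟨x0, hx0, hmin⟩ := hK.exists_isMinOn ⟨0, fun u _ => by simp⟩ hcont.continuousOn
  have hmin' : ∀ x ∈ dualSet n Q, x0 ⬝ᵥ p ≤ x ⬝ᵥ p := fun x hx => hmin hx
  set F := {x ∈ dualSet n Q | x ⬝ᵥ p = x0 ⬝ᵥ p} with hF
  have hFc : IsCompact F := by
    have : F = dualSet n Q ∩ {x | x ⬝ᵥ p = x0 ⬝ᵥ p} := rfl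
    rw [this]
    exact hK.inter_right (isClosed_eq hcont continuous_const)
  obtain ⟨u, hu⟩ := hFc.extremePoints_nonempty ⟨x0, hx0, rfl⟩
  have huF := hu.1
  refine ⟨u, ⟨huF.1, ?_⟩, fun x hx => huF.2.le.trans (hmin' x hx)⟩
  intro y hy z hz huyz
  refine hu.2 ?_ ?_ huyz
  all_goals
    obtain ⟨α, β, hα, hβ, hαβ, rfl⟩ := huyz
    have h1 := hmin' y hy
    have h2 := hmin' z hz
    have h3 := huF.2
    simp only [add_dotProduct, smul_dotProduct, smul_eq_mul] at h3
  · refine ⟨hy, ?_⟩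
    have : α * (y ⬝ᵥ p - x0 ⬝ᵥ p) + β * (z ⬝ᵥ p - x0 ⬝ᵥ p) = 0 := by
      linear_combination h3 - hαβ * (x0 ⬝ᵥ p)
    have h4 := mul_nonneg hβ.le (sub_nonneg.2 h2)
    by_contra hne
    have : 0 < α * (y ⬝ᵥ p - x0 ⬝ᵥ p) := mul_pos hα (sub_pos.2 (lt_of_le_of_ne h1 (Ne.symm hne)))
    linarith
  · refine ⟨hz, ?_⟩
    have : α * (y ⬝ᵥ p - x0 ⬝ᵥ p) + β * (z ⬝ᵥ p - x0 ⬝ᵥ p) = 0 := by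
      linear_combination h3 - hαβ * (x0 ⬝ᵥ p)
    have h4 := mul_nonneg hα.le (sub_nonneg.2 h1)
    by_contra hne
    have : 0 < β * (z ⬝ᵥ p - x0 ⬝ᵥ p) := mul_pos hβ (sub_pos.2 (lt_of_le_of_ne h2 (Ne.symm hne)))
    linarith

/-- coordinates -/
def crd {n : ℕ} (N : Matrix (Fin n) (Fin n) ℤ) (p : Fin n → ℝ) (j : Fin n) : ℝ :=
  ∑ k, p k * (N k j : ℝ)

theorem FD.expand {n S a v e M N} (h : FD n S a v e M N) (p : Fin n → ℝ) :
    p = ∑ j, (crd N p j * a (e j)) • e j := by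
  ext l
  have h1 : ∀ k l, ∑ j, (N k j : ℝ) * (M j l : ℝ) = if k = l then 1 else 0 := by
    intro k l
    have := congrFun (congrFun h.nm k) l
    rw [Matrix.mul_apply, Matrix.one_apply] at this
    exact_mod_cast this
  simp only [Finset.sum_apply, Pi.smul_apply, smul_eq_mul, mul_assoc, ← h.row, crd, Finset.sum_mul]
  rw [Finset.sum_comm]
  simp only [← Finset.mul_sum, h1]
  simp

theorem FD.dot {n S a v e M N} (h : FD n S a v e M N) (x p : Fin n → ℝ) :
    x ⬝ᵥ p = ∑ j, crd N p j * a (e j) * (x ⬝ᵥ e j) := by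
  conv_lhs => rw [h.expand p]
  simp [dotProduct_sum, dotProduct_smul]

theorem FD.self {n S a v e M N} (h : FD n S a v e M N) (i : Fin n) : v ⬝ᵥ e i = -1 :=
  (h.iff _ (h.mem i)).2 ⟨i, rfl⟩

/-- the cone lemma -/
theorem cone_nonneg {n : ℕ} {S : Finset (Fin n → ℝ)} {a : (Fin n → ℝ) → ℤ}
    {u e M N} (h : FD n S a u e M N) (hapos : ∀ s ∈ S, 0 < a s) (p : Fin n → ℝ)
    (hu : u ∈ dualSet n (convexHull ℝ (S : Set (Fin n → ℝ))))
    (hmin : ∀ x ∈ dualSet n (convexHull ℝ (S : Set (Fin n → ℝ))), u ⬝ᵥ p ≤ x ⬝ᵥ p)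
    (j : Fin n) : 0 ≤ crd N p j := by
  by_contra! hneg
  set D : Fin n → ℝ := fun k => N k j with hD
  have hDp : D ⬝ᵥ p = crd N p j := by
    simp [dotProduct, crd, hD, mul_comm]
  have hDe : ∀ i, 0 ≤ D ⬝ᵥ e i := by
    intro i
    have h1 := congrFun (congrFun h.mn i) j
    have ha : (0:ℝ) < a (e i) := by exact_mod_cast hapos _ (h.mem i)
    have h2 : (a (e i) : ℝ) * (D ⬝ᵥ e i) = ((M * N) i j : ℤ) := by
      rw [Matrix.mul_apply]
      push_cast
      simp only [h.row, dotProduct, Finset.mul_sum, hD]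
      exact Finset.sum_congr rfl fun k _ => by ring
    have h3 : (0:ℤ) ≤ (M * N) i j := by
      rw [h1, Matrix.one_apply]; split <;> norm_num
    have : 0 ≤ (a (e i) : ℝ) * (D ⬝ᵥ e i) := by rw [h2]; exact_mod_cast h3
    exact nonneg_of_mul_nonneg_right this ha
  have key : ∀ s ∈ S, ∀ᶠ ε in nhdsWithin (0:ℝ) (Set.Ioi 0), -1 ≤ (u + ε • D) ⬝ᵥ s := by
    intro s hs
    simp only [add_dotProduct, smul_dotProduct, smul_eq_mul]
    by_cases hs1 : u ⬝ᵥ s = -1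
    · obtain ⟨i, rfl⟩ := (h.iff s hs).1 hs1
      filter_upwards [self_mem_nhdsWithin] with ε hε
      have := mul_nonneg (le_of_lt hε) (hDe i)
      linarith
    · have hlt : -1 < u ⬝ᵥ s := lt_of_le_of_ne (mem_dual.1 hu s hs) (Ne.symm hs1)
      have ht : Filter.Tendsto (fun ε : ℝ => u ⬝ᵥ s + ε * (D ⬝ᵥ s)) (nhdsWithin (0:ℝ) (Set.Ioi 0))
          (nhds (u ⬝ᵥ s)) := by
        have : Continuous (fun ε : ℝ => u ⬝ᵥ s + ε * (D ⬝ᵥ s)) := by fun_prop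
        have h5 := this.tendsto 0
        simp only [zero_mul, add_zero] at h5
        exact h5.mono_left nhdsWithin_le_nhds
      filter_upwards [ht.eventually (lt_mem_nhds hlt)] with ε hε using hε.le
  have key2 := (Filter.eventually_all_finset S).2 key
  obtain ⟨ε, h1, h2⟩ := (key2.and self_mem_nhdsWithin).exists
  have h3 := hmin (u + ε • D) (mem_dual.2 h1)
  simp only [add_dotProduct, smul_dotProduct, smul_eq_mul, hDp] at h3
  have : ε * crd N p j < 0 := mul_neg_of_pos_of_neg h2 hneg
  linarith

theorem zero_not_mem {n : ℕ} (hn : 1 ≤ n) {S : Finset (Fin n → ℝ)} {Q : Set (Fin n → ℝ)}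
    (hvert : Set.extremePoints ℝ Q = (S : Set (Fin n → ℝ)))
    (h0 : (0 : Fin n → ℝ) ∈ interior Q) : (0 : Fin n → ℝ) ∉ S := by
  intro h
  have h1 : (0 : Fin n → ℝ) ∈ Set.extremePoints ℝ Q := by rw [hvert]; exact h
  obtain ⟨δ, hδ, hs⟩ := small_mem h0
  have hδ' : ‖(δ : ℝ)‖ = δ := by simp [abs_of_pos hδ]
  have := h1.2 (hs (Pi.single ⟨0, hn⟩ δ) (by rw [Pi.norm_single, hδ']))
    (hs (Pi.single ⟨0, hn⟩ (-δ)) (by rw [Pi.norm_single, norm_neg, hδ']))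
    ⟨1/2, 1/2, by norm_num, by norm_num, by norm_num, by
      ext i; by_cases hi : i = ⟨0, hn⟩ <;> simp [hi, Pi.single_apply]⟩
  have := congrFun this ⟨0, hn⟩
  simp at this
  exact hδ.ne' this

theorem L1 {n : ℕ} (hn : 1 ≤ n) {S : Finset (Fin n → ℝ)}
    (hvert : Set.extremePoints ℝ (convexHull ℝ (S : Set (Fin n → ℝ))) = (S : Set (Fin n → ℝ)))
    (h0 : (0 : Fin n → ℝ) ∈ interior (convexHull ℝ (S : Set (Fin n → ℝ))))
    {u : Fin n → ℝ} (hu : u ∈ dualSet n (convexHull ℝ (S : Set (Fin n → ℝ))))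
    {t : Fin n → ℝ} (ht : t ∈ S) {ι : Type} [Fintype ι] (κ : ι → ℝ) (g : ι → Fin n → ℝ)
    (hκ : ∀ i, 0 ≤ κ i) (hg : ∀ i, g i ∈ S) (hug : ∀ i, κ i ≠ 0 → u ⬝ᵥ g i = -1)
    (hexp : t = ∑ i, κ i • g i) : u ⬝ᵥ t = -1 := by
  have hz := zero_not_mem hn hvert h0
  have h1 : u ⬝ᵥ t = - ∑ i, κ i := by
    rw [hexp, dotProduct_sum, ← Finset.sum_neg_distrib]
    refine Finset.sum_congr rfl fun i _ => ?_
    rw [dotProduct_smul, smul_eq_mul]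
    by_cases h : κ i = 0
    · simp [h]
    · rw [hug i h]; ring
  have h2 := mem_dual.1 hu t ht
  set σ := ∑ i, κ i with hσ
  have hσ0 : 0 ≤ σ := Finset.sum_nonneg fun i _ => hκ i
  by_contra hne
  have hlt : σ < 1 := by
    refine lt_of_le_of_ne (by linarith) fun h => hne (by rw [h1, h])
  rcases hσ0.eq_or_lt with h | h
  · have : ∀ i, κ i = 0 := fun i =>
      (Finset.sum_eq_zero_iff_of_nonneg (fun i _ => hκ i)).1 h.symm i (Finset.mem_univ i)
    apply hz
    have h0' : t = 0 := by rw [hexp]; simp [this]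
    rwa [h0'] at ht
  · have hmem : σ⁻¹ • t ∈ convexHull ℝ (S : Set (Fin n → ℝ)) := by
      have : σ⁻¹ • t = ∑ i, (σ⁻¹ * κ i) • g i := by
        conv_lhs => rw [hexp]
        rw [Finset.smul_sum]
        simp [smul_smul]
      rw [this]
      refine (convex_convexHull ℝ _).sum_mem (fun i _ => mul_nonneg (inv_nonneg.2 h.le) (hκ i)) ?_
        (fun i _ => subset_convexHull ℝ _ (hg i))
      rw [← Finset.mul_sum, ← hσ]
      exact inv_mul_cancel₀ h.ne'
    have hte : t ∈ Set.extremePoints ℝ (convexHull ℝ (S : Set (Fin n → ℝ))) := by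
      rw [hvert]; exact ht
    have := hte.2 (interior_subset h0) hmem ⟨1 - σ, σ, by linarith, h, by ring, by
      rw [smul_smul, mul_inv_cancel₀ h.ne']; simp⟩
    rw [← this] at ht
    exact hz ht

theorem nonface {n : ℕ} (hn : 1 ≤ n) {S : Finset (Fin n → ℝ)} {a : (Fin n → ℝ) → ℤ}
    (hvert : Set.extremePoints ℝ (convexHull ℝ (S : Set (Fin n → ℝ))) = (S : Set (Fin n → ℝ)))
    (h0 : (0 : Fin n → ℝ) ∈ interior (convexHull ℝ (S : Set (Fin n → ℝ))))
    (hapos : ∀ s ∈ S, 0 < a s)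
    (hF : ∀ v ∈ Set.extremePoints ℝ (dualSet n (convexHull ℝ (S : Set (Fin n → ℝ)))),
      ∃ e M N, FD n S a v e M N)
    (hcard : n + 2 ≤ S.card)
    {v : Fin n → ℝ} (hv : v ∈ dualSet n (convexHull ℝ (S : Set (Fin n → ℝ))))
    {e M N} (hfd : FD n S a v e M N) {h : Fin n → ℝ} (hh : h ∈ S) (hvh : v ⬝ᵥ h ≠ -1) :
    ∃ i0, ∀ u ∈ Set.extremePoints ℝ (dualSet n (convexHull ℝ (S : Set (Fin n → ℝ)))),
      u ⬝ᵥ h = -1 → ∃ i, i ≠ i0 ∧ u ⬝ᵥ e i ≠ -1 := by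
  classical
  by_contra! hcon
  choose u hu huh hue using hcon
  have ha : ∀ i, (0:ℝ) < a (e i) := fun i => by exact_mod_cast hapos _ (hfd.mem i)
  have hvh' : -1 < v ⬝ᵥ h := lt_of_le_of_ne (mem_dual.1 hv h hh) (Ne.symm hvh)
  have hγ : ∀ i, crd N h i < 0 := by
    intro i
    have h1 := hfd.dot (u i) h
    have h2 := hfd.dot v h
    have h3 : u i ⬝ᵥ h - v ⬝ᵥ h = crd N h i * a (e i) * (u i ⬝ᵥ e i + 1) := by
      rw [h1, h2, ← Finset.sum_sub_distrib, Finset.sum_eq_single i]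
      · rw [hfd.self]; ring
      · intro j _ hj
        rw [hfd.self, hue i j hj]; ring
      · simp
    rw [huh] at h3
    have h4 := mem_dual.1 (hu i).1 (e i) (hfd.mem i)
    by_contra! h5
    have : 0 ≤ crd N h i * a (e i) * (u i ⬝ᵥ e i + 1) :=
      mul_nonneg (mul_nonneg h5 (ha i).le) (by linarith)
    linarith
  -- pick `t`
  obtain ⟨t, htS, htn⟩ : ∃ t ∈ S, t ∉ insert h (Finset.univ.image e) := by
    by_contra! hsub
    have h1 := Finset.card_le_card (show S ⊆ insert h (Finset.univ.image e) from hsub)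
    have h2 := Finset.card_insert_le h (Finset.univ.image e)
    have h3 : (Finset.univ.image e).card ≤ n := by
      simpa using (Finset.card_image_le (s := Finset.univ) (f := e))
    omega
  simp only [Finset.mem_insert, Finset.mem_image, Finset.mem_univ, true_and, not_or] at htn
  obtain ⟨hth, hte⟩ := htn
  by_cases hpos : ∀ i, 0 ≤ crd N t i
  · apply hte
    rw [← hfd.iff t htS]
    exact L1 hn hvert h0 hv htS (fun j => crd N t j * a (e j)) e
      (fun j => mul_nonneg (hpos j) (ha j).le) hfd.mem (fun j _ => hfd.self j) (hfd.expand t)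
  · push Not at hpos
    obtain ⟨i1, hi1⟩ := hpos
    have : Nonempty (Fin n) := ⟨i1⟩
    obtain ⟨i0, hi0⟩ := Finite.exists_max (fun i => crd N t i / crd N h i)
    set μ := crd N t i0 / crd N h i0 with hμ
    have hμ0 : 0 ≤ μ := (div_pos_of_neg_of_neg hi1 (hγ i1)).le.trans (hi0 i1)
    have hc : ∀ i, 0 ≤ crd N t i - μ * crd N h i := by
      intro i
      have := hi0 i
      rw [div_le_iff_of_neg (hγ i)] at this
      linarith
    have hci0 : crd N t i0 - μ * crd N h i0 = 0 := by
      rw [hμ, div_mul_cancel₀ _ (hγ i0).ne]; ring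
    have hut : u i0 ⬝ᵥ t = -1 := by
      refine L1 hn hvert h0 (hu i0).1 htS (ι := Option (Fin n))
        (fun o => o.elim μ (fun i => (crd N t i - μ * crd N h i) * a (e i)))
        (fun o => o.elim h e) ?_ ?_ ?_ ?_
      · rintro (_ | i)
        · exact hμ0
        · exact mul_nonneg (hc i) (ha i).le
      · rintro (_ | i)
        · exact hh
        · exact hfd.mem i
      · rintro (_ | i) hi
        · exact huh i0
        · refine hue i0 i ?_
          rintro rfl
          apply hi
          simp [hci0]
      · rw [Fintype.sum_option]
        simp only [Option.elim]
        conv_lhs => rw [hfd.expand t]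
        conv_rhs => enter [1]; rw [hfd.expand h]
        rw [Finset.smul_sum, ← Finset.sum_add_distrib]
        refine Finset.sum_congr rfl fun i _ => ?_
        rw [smul_smul, ← add_smul]
        congr 1; ring
    obtain ⟨f, M', N', hf⟩ := hF _ (hu i0)
    have hsub : insert t (insert h ((Finset.univ.erase i0).image e)) ⊆ Finset.univ.image f := by
      intro s hs
      have hs2 : s ∈ S ∧ u i0 ⬝ᵥ s = -1 := by
        simp only [Finset.mem_insert, Finset.mem_image, Finset.mem_erase] at hs
        rcases hs with rfl | rfl | ⟨i, hi, rfl⟩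
        · exact ⟨htS, hut⟩
        · exact ⟨hh, huh i0⟩
        · exact ⟨hfd.mem i, hue i0 i hi.1⟩
      obtain ⟨j, hj⟩ := (hf.iff s hs2.1).1 hs2.2
      exact Finset.mem_image.2 ⟨j, Finset.mem_univ _, hj⟩
    have h1 := Finset.card_le_card hsub
    have h3 : (Finset.univ.image f).card ≤ n := by
      simpa using (Finset.card_image_le (s := Finset.univ) (f := f))
    have hhe : ∀ i, e i ≠ h := fun i hi => hvh (by rw [← hi]; exact hfd.self i)
    rw [Finset.card_insert_of_notMem, Finset.card_insert_of_notMem,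
      Finset.card_image_of_injective _ hfd.inj, Finset.card_erase_of_mem (Finset.mem_univ _),
      Finset.card_univ, Fintype.card_fin] at h1
    · omega
    · simp only [Finset.mem_image, not_exists, not_and]
      exact fun i _ => hhe i
    · simp only [Finset.mem_insert, Finset.mem_image, not_or, not_exists, not_and]
      exact ⟨hth, fun i _ hi => hte ⟨i, hi⟩⟩

theorem integral {n : ℕ} (hn : 1 ≤ n) {S : Finset (Fin n → ℝ)} {a : (Fin n → ℝ) → ℤ}
    (hvert : Set.extremePoints ℝ (convexHull ℝ (S : Set (Fin n → ℝ))) = (S : Set (Fin n → ℝ)))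
    (h0 : (0 : Fin n → ℝ) ∈ interior (convexHull ℝ (S : Set (Fin n → ℝ))))
    (hapos : ∀ s ∈ S, 0 < a s)
    (hF : ∀ v ∈ Set.extremePoints ℝ (dualSet n (convexHull ℝ (S : Set (Fin n → ℝ)))),
      ∃ e M N, FD n S a v e M N) (s : Fin n → ℝ) (hs : s ∈ S) :
    ∃ P : Fin n → ℤ, ∀ k, (P k : ℝ) = a s * s k := by
  obtain ⟨u, hu, hmin⟩ := exists_min h0 s
  obtain ⟨f, M, N, hf⟩ := hF u hu
  have h1 : u ⬝ᵥ s = -1 := L1 hn hvert h0 hu.1 hs (fun j => crd N s j * a (f j)) f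
      (fun j => mul_nonneg (cone_nonneg hf hapos s hu.1 hmin j)
        (by exact_mod_cast (hapos _ (hf.mem j)).le)) hf.mem (fun j _ => hf.self j) (hf.expand s)
  obtain ⟨i, rfl⟩ := (hf.iff s hs).1 h1
  exact ⟨M i, hf.row i⟩

theorem recursion {n : ℕ} (hn : 1 ≤ n) {S : Finset (Fin n → ℝ)} {a : (Fin n → ℝ) → ℤ}
    (hvert : Set.extremePoints ℝ (convexHull ℝ (S : Set (Fin n → ℝ))) = (S : Set (Fin n → ℝ)))
    (h0 : (0 : Fin n → ℝ) ∈ interior (convexHull ℝ (S : Set (Fin n → ℝ))))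
    (hapos : ∀ s ∈ S, 0 < a s)
    (hF : ∀ v ∈ Set.extremePoints ℝ (dualSet n (convexHull ℝ (S : Set (Fin n → ℝ)))),
      ∃ e M N, FD n S a v e M N)
    (hcard : n + 2 ≤ S.card)
    (C : ℝ) (hC : ∀ T ⊆ S, T.card ≤ n → ∑ s ∈ T, (a s : ℝ) ≤ C)
    {v : Fin n → ℝ} (hv : v ∈ dualSet n (convexHull ℝ (S : Set (Fin n → ℝ))))
    {e M N} (hfd : FD n S a v e M N) {h : Fin n → ℝ} (hh : h ∈ S) (hvh : v ⬝ᵥ h ≠ -1) :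
    ∃ (f : Fin n → Fin n → ℝ) (b : Fin n → ℤ) (d : ℤ), (∀ j, f j ∈ S) ∧ (∀ j, 0 ≤ b j) ∧ 1 ≤ d ∧
      (a h : ℝ) * (1 + v ⬝ᵥ h) = ∑ j, (b j : ℝ) * (a (f j) * (1 + v ⬝ᵥ f j)) + d ∧
      ∑ j, (b j : ℝ) + d ≤ C := by
  classical
  obtain ⟨i0, hi0⟩ := nonface hn hvert h0 hapos hF hcard hv hfd hh hvh
  have hhe : ∀ i, e i ≠ h := fun i hi => hvh (by rw [← hi]; exact hfd.self i)
  set T := insert h ((Finset.univ.erase i0).image e) with hT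
  have hTS : T ⊆ S := by
    intro s hs
    simp only [hT, Finset.mem_insert, Finset.mem_image] at hs
    rcases hs with rfl | ⟨i, _, rfl⟩
    · exact hh
    · exact hfd.mem i
  have hTc : T.card ≤ n := by
    have h1 := Finset.card_insert_le h ((Finset.univ.erase i0).image e)
    have h2 := Finset.card_image_le (s := Finset.univ.erase i0) (f := e)
    rw [Finset.card_erase_of_mem (Finset.mem_univ _), Finset.card_univ, Fintype.card_fin] at h2
    rw [hT]
    omega
  set p : Fin n → ℝ := ∑ s ∈ T, (a s : ℝ) • s with hp
  obtain ⟨P, hP⟩ : ∃ P : Fin n → ℤ, ∀ k, (P k : ℝ) = p k := by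
    choose! R hR using integral hn hvert h0 hapos hF
    refine ⟨fun k => ∑ s ∈ T, R s k, fun k => ?_⟩
    push_cast
    rw [hp, Finset.sum_apply]
    refine Finset.sum_congr rfl fun s hs => ?_
    rw [hR s (hTS hs)]; rfl
  obtain ⟨u, hu, hmin⟩ := exists_min h0 p
  obtain ⟨f, M', N', hf⟩ := hF u hu
  have hnn := cone_nonneg hf hapos p hu.1 hmin
  set b : Fin n → ℤ := fun j => ∑ k, P k * N' k j with hb
  have hbc : ∀ j, (b j : ℝ) = crd N' p j := by
    intro j
    simp only [hb, crd, ← hP]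
    push_cast; rfl
  have hb0 : ∀ j, 0 ≤ b j := by
    intro j
    have := hnn j
    rw [← hbc] at this
    exact_mod_cast this
  have hdot : ∀ x : Fin n → ℝ, ∑ s ∈ T, (a s : ℝ) * (x ⬝ᵥ s) = ∑ j, b j * a (f j) * (x ⬝ᵥ f j) := by
    intro x
    have h1 := hf.dot x p
    simp only [← hbc] at h1
    rw [← h1, hp, dotProduct_sum]
    simp
  have hup := hdot u
  have hlt : -∑ s ∈ T, (a s : ℝ) < ∑ s ∈ T, (a s : ℝ) * (u ⬝ᵥ s) := by
    rw [← Finset.sum_neg_distrib]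
    have hpos : ∀ s ∈ T, (0:ℝ) < a s := fun s hs => by exact_mod_cast hapos s (hTS hs)
    apply Finset.sum_lt_sum
    · intro s hs
      have := mem_dual.1 hu.1 s (hTS hs)
      nlinarith [hpos s hs]
    · by_cases huh : u ⬝ᵥ h = -1
      · obtain ⟨i, hi, hui⟩ := hi0 u hu huh
        have hiT : e i ∈ T := Finset.mem_insert_of_mem
          (Finset.mem_image_of_mem _ (Finset.mem_erase.2 ⟨hi, Finset.mem_univ _⟩))
        refine ⟨e i, hiT, ?_⟩
        have := lt_of_le_of_ne (mem_dual.1 hu.1 (e i) (hfd.mem i)) (Ne.symm hui)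
        nlinarith [hpos _ hiT]
      · have hiT : h ∈ T := Finset.mem_insert_self _ _
        refine ⟨h, hiT, ?_⟩
        have := lt_of_le_of_ne (mem_dual.1 hu.1 h hh) (Ne.symm huh)
        nlinarith [hpos _ hiT]
  simp only [hf.self] at hup
  have hd : (0:ℤ) < ∑ s ∈ T, a s - ∑ j, b j * a (f j) := by
    have : (0:ℝ) < ∑ s ∈ T, (a s : ℝ) - ∑ j, (b j : ℝ) * a (f j) := by
      have h2 : ∑ j, (b j : ℝ) * a (f j) * (-1) = - ∑ j, (b j : ℝ) * a (f j) := by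
        rw [← Finset.sum_mul]; ring
      linarith
    exact_mod_cast this
  refine ⟨f, b, ∑ s ∈ T, a s - ∑ j, b j * a (f j), hf.mem, hb0, hd, ?_, ?_⟩
  · have hzT : ∑ s ∈ T, (a s : ℝ) * (1 + v ⬝ᵥ s) = a h * (1 + v ⬝ᵥ h) := by
      refine Finset.sum_eq_single_of_mem h (Finset.mem_insert_self _ _) ?_
      intro s hs hsh
      simp only [hT, Finset.mem_insert, Finset.mem_image] at hs
      rcases hs with rfl | ⟨i, _, rfl⟩
      · exact absurd rfl hsh
      · rw [hfd.self]; ring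
    rw [← hzT]
    simp only [mul_add, mul_one, Finset.sum_add_distrib]
    rw [hdot v]
    push_cast
    simp only [mul_assoc]
    ring
  · have h3 := hC T hTS hTc
    have h4 : ∑ j, (b j : ℝ) ≤ ∑ j, (b j : ℝ) * a (f j) := by
      refine Finset.sum_le_sum fun j _ => ?_
      have h5 : (1:ℝ) ≤ a (f j) := by exact_mod_cast hapos _ (hf.mem j)
      have h6 : (0:ℝ) ≤ b j := by exact_mod_cast hb0 j
      nlinarith
    push_cast
    linarith

theorem zbound {n : ℕ} (hn : 1 ≤ n) {S : Finset (Fin n → ℝ)} {a : (Fin n → ℝ) → ℤ}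
    (hvert : Set.extremePoints ℝ (convexHull ℝ (S : Set (Fin n → ℝ))) = (S : Set (Fin n → ℝ)))
    (h0 : (0 : Fin n → ℝ) ∈ interior (convexHull ℝ (S : Set (Fin n → ℝ))))
    (hapos : ∀ s ∈ S, 0 < a s)
    (hF : ∀ v ∈ Set.extremePoints ℝ (dualSet n (convexHull ℝ (S : Set (Fin n → ℝ)))),
      ∃ e M N, FD n S a v e M N)
    (r : ℕ) (hcard : S.card = n + r) (hr : 2 ≤ r)
    (C : ℝ) (hC1 : 1 ≤ C) (hC : ∀ T ⊆ S, T.card ≤ n → ∑ s ∈ T, (a s : ℝ) ≤ C)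
    {v : Fin n → ℝ} (hv : v ∈ Set.extremePoints ℝ (dualSet n (convexHull ℝ (S : Set (Fin n → ℝ)))))
    {h : Fin n → ℝ} (hh : h ∈ S) : (a h : ℝ) * (1 + v ⬝ᵥ h) ≤ C ^ r := by
  classical
  obtain ⟨e, M, N, hfd⟩ := hF v hv
  set z : (Fin n → ℝ) → ℝ := fun s => (a s : ℝ) * (1 + v ⬝ᵥ s) with hz
  have hz0 : ∀ s ∈ S, 0 ≤ z s := by
    intro s hs
    have h1 := mem_dual.1 hv.1 s hs
    have h2 : (0:ℝ) ≤ a s := by exact_mod_cast (hapos s hs).le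
    exact mul_nonneg h2 (by linarith)
  set U := S.filter (fun s => v ⬝ᵥ s ≠ -1) with hU
  have key : ∀ k : ℕ, ∀ h ∈ U, (U.filter (fun s => z s < z h)).card < k → z h ≤ C ^ k := by
    intro k
    induction k with
    | zero => intro h _ h1; omega
    | succ k ih =>
      intro h hhU hk
      obtain ⟨hhS, hvh⟩ := Finset.mem_filter.1 hhU
      obtain ⟨f, b, d, hfS, hb0, hd, heq, hle⟩ :=
        recursion hn hvert h0 hapos hF (by omega) C hC hv.1 hfd hhS hvh
      have hCk : (1:ℝ) ≤ C ^ k := one_le_pow₀ hC1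
      have hb0' : ∀ j, (0:ℝ) ≤ b j := fun j => by exact_mod_cast hb0 j
      have hd' : (1:ℝ) ≤ d := by exact_mod_cast hd
      have heq' : z h = ∑ j, (b j : ℝ) * z (f j) + d := heq
      have hterm : ∀ j, (b j : ℝ) * z (f j) ≤ b j * C ^ k := by
        intro j
        rcases (hb0 j).eq_or_lt with hbj | hbj
        · rw [← hbj]; simp
        refine mul_le_mul_of_nonneg_left ?_ (hb0' j)
        by_cases hfj : v ⬝ᵥ f j = -1
        · have : z (f j) = 0 := by simp [hz, hfj]
          rw [this]; linarith
        have hfU : f j ∈ U := Finset.mem_filter.2 ⟨hfS j, hfj⟩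
        have hlt : z (f j) < z h := by
          have h1 : (b j : ℝ) * z (f j) ≤ ∑ j, (b j : ℝ) * z (f j) :=
            Finset.single_le_sum (f := fun j => (b j : ℝ) * z (f j))
              (fun i _ => mul_nonneg (hb0' i) (hz0 _ (hfS i))) (Finset.mem_univ j)
          have h2 : (1:ℝ) ≤ b j := by exact_mod_cast hbj
          nlinarith [hz0 _ (hfS j)]
        apply ih _ hfU
        refine lt_of_lt_of_le (Finset.card_lt_card ?_) (Nat.lt_succ_iff.1 hk)
        rw [Finset.ssubset_iff_of_subset]
        · exact ⟨f j, Finset.mem_filter.2 ⟨hfU, hlt⟩, by simp⟩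
        · intro s hs
          rw [Finset.mem_filter] at hs ⊢
          exact ⟨hs.1, hs.2.trans hlt⟩
      have h3 := Finset.sum_le_sum (fun j (_ : j ∈ Finset.univ) => hterm j)
      rw [← Finset.sum_mul] at h3
      calc z h ≤ (∑ j, (b j : ℝ)) * C ^ k + d * C ^ k := by nlinarith
        _ = (∑ j, (b j : ℝ) + d) * C ^ k := by ring
        _ ≤ C * C ^ k := by gcongr
        _ = C ^ (k + 1) := by ring
  by_cases hvh : v ⬝ᵥ h = -1
  · rw [hvh]; simp; positivity
  have hhU : h ∈ U := Finset.mem_filter.2 ⟨hh, hvh⟩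
  apply key r h hhU
  have h1 : (U.filter (fun s => z s < z h)).card < U.card := by
    apply Finset.card_lt_card
    rw [Finset.ssubset_iff_of_subset (Finset.filter_subset _ _)]
    exact ⟨h, hhU, by simp⟩
  have h2 : U.card + (Finset.univ.image e).card ≤ S.card := by
    rw [← Finset.card_union_of_disjoint]
    · apply Finset.card_le_card
      intro s hs
      rcases Finset.mem_union.1 hs with hs | hs
      · exact (Finset.mem_filter.1 hs).1
      · obtain ⟨i, _, rfl⟩ := Finset.mem_image.1 hs
        exact hfd.mem i
    · rw [Finset.disjoint_left]
      intro s hs hs2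
      obtain ⟨i, _, rfl⟩ := Finset.mem_image.1 hs2
      exact (Finset.mem_filter.1 hs).2 (hfd.self i)
  rw [Finset.card_image_of_injective _ hfd.inj, Finset.card_univ, Fintype.card_fin] at h2
  omega

/-- Proposition 4.5 (case `ρ ≥ 2`).  Let `Q ⊆ ℝⁿ` be a polytope with vertex set `S`
containing `0` in its interior, with positive integer weights `a s` on the vertices.
Assume that for every extreme point `v` of `Q*` the facet `{u ∈ Q : ⟨v,u⟩ = -1}` has
exactly `n` vertices `e₁,…,eₙ` with `(a(e₁)e₁,…,a(eₙ)eₙ)` a `ℤ`-basis of `ℤⁿ`; that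
`r := #S - n ≥ 2`; and that every sum of at most `n` vertex weights is at most `C`.
If `A = max_{s ∈ S} a(s)`, then `vol(Q*) ≤ (C^r · A)ⁿ`. -/
theorem stmt4 (n : ℕ) (hn : 1 ≤ n)
    (S : Finset (Fin n → ℝ)) (Q : Set (Fin n → ℝ))
    (hQ : Q = convexHull ℝ (S : Set (Fin n → ℝ)))
    (hvert : Set.extremePoints ℝ Q = (S : Set (Fin n → ℝ)))
    (h0 : (0 : Fin n → ℝ) ∈ interior Q)
    (a : (Fin n → ℝ) → ℤ) (hapos : ∀ s ∈ S, 0 < a s)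
    (hfacet : ∀ v ∈ Set.extremePoints ℝ (dualSet n Q),
      ∃ e : Fin n → (Fin n → ℝ), Function.Injective e ∧ (∀ i, e i ∈ S) ∧
        (∀ s ∈ S, ((∑ j, v j * s j = -1) ↔ ∃ i, e i = s)) ∧
        ∃ M : Matrix (Fin n) (Fin n) ℤ,
          (∀ i j, ((M i j : ℤ) : ℝ) = (a (e i) : ℝ) * e i j) ∧ IsUnit M.det)
    (r : ℕ) (hcard : S.card = n + r) (hr : 2 ≤ r)
    (C : ℝ) (hC : ∀ T ⊆ S, T.card ≤ n → ∑ s ∈ T, (a s : ℝ) ≤ C)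
    (A : ℤ) (hA : IsGreatest (a '' (S : Set (Fin n → ℝ))) A) :
    MeasureTheory.volume (dualSet n Q) ≤ ENNReal.ofReal ((C ^ r * (A : ℝ)) ^ n) := by
  subst hQ
  have hF : ∀ v ∈ Set.extremePoints ℝ (dualSet n (convexHull ℝ (S : Set (Fin n → ℝ)))),
      ∃ e M N, FD n S a v e M N := by
    intro v hv
    obtain ⟨e, h1, h2, h3, M, h4, h5⟩ := hfacet v hv
    exact ⟨e, M, M⁻¹, h1, h2, h3, h4, M.mul_nonsing_inv h5, M.nonsing_inv_mul h5⟩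
  obtain ⟨v, hv, -⟩ := exists_min h0 (0 : Fin n → ℝ)
  obtain ⟨e, M, N, hfd⟩ := hF v hv
  obtain ⟨⟨s0, hs0, hs0A⟩, hAub⟩ := hA
  have hA1 : (1:ℝ) ≤ A := by
    rw [← hs0A]; exact_mod_cast hapos s0 hs0
  have hC1 : (1:ℝ) ≤ C := by
    have h1 := hC {s0} (by simpa using hs0) (by simpa using hn)
    rw [Finset.sum_singleton, hs0A] at h1
    linarith
  have hbox : ∀ x ∈ dualSet n (convexHull ℝ (S : Set (Fin n → ℝ))), ∀ i,
      (a (e i) : ℝ) * (1 + x ⬝ᵥ e i) ≤ C ^ r := by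
    intro x hx i
    rw [← closure_convexHull_extremePoints (dual_compact h0) dual_convex] at hx
    have hcl : IsClosed {x : Fin n → ℝ | (a (e i) : ℝ) * (1 + x ⬝ᵥ e i) ≤ C ^ r} :=
      isClosed_le (by unfold dotProduct; fun_prop) continuous_const
    have hcv : Convex ℝ {x : Fin n → ℝ | (a (e i) : ℝ) * (1 + x ⬝ᵥ e i) ≤ C ^ r} := by
      intro y hy z hz α β hα hβ hαβ
      change (a (e i) : ℝ) * (1 + y ⬝ᵥ e i) ≤ C ^ r at hy
      change (a (e i) : ℝ) * (1 + z ⬝ᵥ e i) ≤ C ^ r at hz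
      change (a (e i) : ℝ) * (1 + (α • y + β • z) ⬝ᵥ e i) ≤ C ^ r
      simp only [add_dotProduct, smul_dotProduct, smul_eq_mul]
      have h1 := mul_le_mul_of_nonneg_left hy hα
      have h2 := mul_le_mul_of_nonneg_left hz hβ
      have hβ' : β = 1 - α := by linarith
      subst hβ'
      linarith
    exact closure_minimal (convexHull_min (fun w hw => zbound hn hvert h0 hapos hF r hcard hr C hC1
      hC hw (hfd.mem i)) hcv) hcl hx
  set R : Matrix (Fin n) (Fin n) ℝ := M.map (Int.cast : ℤ → ℝ) with hR
  have hdet : |R.det| = 1 := by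
    have h1 : R.det = ((M.det : ℤ) : ℝ) := by
      rw [hR]
      exact ((Int.castRingHom ℝ).map_det M).symm
    have h2 : IsUnit M.det := Matrix.isUnit_det_of_right_inverse hfd.mn
    rw [h1]
    rcases Int.isUnit_iff.1 h2 with h | h <;> simp [h]
  have hld : LinearMap.det (Matrix.toLin' R) = R.det := LinearMap.det_toLin' R
  have hsub : dualSet n (convexHull ℝ (S : Set (Fin n → ℝ))) ⊆ (Matrix.toLin' R) ⁻¹'
      (Set.Icc (fun i => -(a (e i) : ℝ)) (fun i => C ^ r - a (e i))) := by
    intro x hx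
    have hval : ∀ i, Matrix.toLin' R x i = a (e i) * (x ⬝ᵥ e i) := by
      intro i
      rw [Matrix.toLin'_apply]
      simp only [Matrix.mulVec, dotProduct, hR, Matrix.map_apply, hfd.row, Finset.mul_sum]
      exact Finset.sum_congr rfl fun k _ => by ring
    refine ⟨fun i => ?_, fun i => ?_⟩
    · rw [hval]
      have h1 := mem_dual.1 hx (e i) (hfd.mem i)
      have h2 : (0:ℝ) ≤ a (e i) := by exact_mod_cast (hapos _ (hfd.mem i)).le
      nlinarith
    · rw [hval]
      have := hbox x hx i
      linarith
  refine (MeasureTheory.measure_mono hsub).trans ?_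
  rw [MeasureTheory.Measure.addHaar_preimage_linearMap _ (by
    rw [hld]; intro h; rw [h] at hdet; simp at hdet), hld, abs_inv, hdet, Real.volume_Icc_pi]
  have hCr : (0:ℝ) ≤ C ^ r := by positivity
  simp only [sub_neg_eq_add, sub_add_cancel, Finset.prod_const, Finset.card_univ, Fintype.card_fin]
  rw [← ENNReal.ofReal_pow hCr]
  simp only [inv_one, ENNReal.ofReal_one, one_mul]
  apply ENNReal.ofReal_le_ofReal
  gcongr
  nlinarith
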